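/- Let h and s be positive integers, k ≥ 1 an integer, and let h_1, …, h_k, c, d be integers with 0 < h_j < C(h+s, s) for j = 1, …, k and C(h+s, s) > c > d ≥ 0. If C(h+s, s) = Σ_{j=1}^k h_j + c − d, then C(h+s, s)^{<s>} ≤ Σ_{j=1}^k h_j^{<s>} + c^{<s>} − d^{<s>}; moreover, if equality holds here, then (C(h+s, s)^{<s>})^{<s>} = Σ_{j=1}^k (h_j^{<s>})^{<s>} + (c^{<s>})^{<s>} − (d^{<s>})^{<s>}. -/

import Mathlib

/-! Order the monomials of degree `e` in `x_0, …, x_s` lexicographically. Then `macUp s m` counts the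
monomials of degree `e + 1` divisible by one of the first `m` of them (for `e` large enough), and
the `m`-th monomial contributes a number of new ones depending only on the index of its last variable. The
sequence of these contributions for `s + 1` consists of one leading entry followed by the initial
segments of length `C(a, s)`, `a = s + 1, s + 2, …`, of the sequence for `s`. `LexSums` axiomatizes
partial sums of sequences with this block structure; the functions `macUp`, `macUp ∘ macUp` and
`K * macUp - macUp ∘ macUp` (with `K` large compared to the range of `s`) are all of this kind.

Two facts are proved together by induction on `s` for any such `F`:

* (`Subadd`) an initial segment has the largest sum among all windows of its length, that is,
  `F s` is subadditive;
* (`TopSubmod`) among all windows of length `q` inside the first `N = C(a, s)` entries, the last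
  one has the smallest sum, that is, `F d + F N ≤ F (d + q) + F (d + r)` when `d + q + r = N`.

Together they give `F N ≤ ∑ F h_j + F c - F d` for `N = ∑ h_j + c - d`. For `F = macUp` this is the
inequality. Under equality, the same estimate for `macUp ∘ macUp` and for
`K * macUp - macUp ∘ macUp` bounds the second iterates from both sides. -/

open Finset

/-- `macUp n h` is `h^{<n>}`, computed via the greedy (Macaulay) binomial
representation `h = C(a_n, n) + C(a_{n-1}, n-1) + ⋯` (equivalently
`h = C(h(n)+n, n) + ⋯ + C(h(i)+i, i)` with `h(n) ≥ ⋯ ≥ h(i) ≥ 0`), giving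
`h^{<n>} = C(a_n+1, n) + C(a_{n-1}+1, n-1) + ⋯`; `macUp n 0 = 0`, `macUp 0 1 = 1`. -/
def macUp : ℕ → ℕ → ℕ
  | 0, h => h
  | n+1, h =>
    if h = 0 then 0
    else
      let a := Nat.findGreatest (fun a => Nat.choose a (n+1) ≤ h) (h + n + 1)
      Nat.choose (a+1) (n+1) + macUp n (h - Nat.choose a (n+1))

/-! ### Partial sums of lexicographic sequences -/

/-- Partial sums `F s m` (for `s ≤ S`) of sequences with the block structure of lexicographic
segments: after the first `C(a, s + 1)` entries, the sequence for `s + 1` repeats the first `C(a, s)`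
entries of the sequence for `s`. The first entries `F s 1` increase with `s ≤ S`; the range of
this last condition is restricted so that `K * macUp - macUp ∘ macUp` qualifies. -/
structure LexSums (S : ℕ) (F : ℕ → ℕ → ℤ) : Prop where
  zero : ∀ s, F s 0 = 0
  base : ∀ q r, F 0 (q + r) = F 0 q + F 0 r
  block : ∀ s a r, s + 1 ≤ a → r ≤ a.choose s →
    F (s + 1) (a.choose (s + 1) + r) = F (s + 1) (a.choose (s + 1)) + F s r
  first : ∀ s, s < S → F s 1 ≤ F (s + 1) 1

/-- Initial segments have maximal sum among windows of the same length. -/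
def Subadd (f : ℕ → ℤ) : Prop := ∀ q r, f (q + r) ≤ f q + f r

/-- Inside the first `C(a, s)` entries, final windows have minimal sum among windows of the same
length, written symmetrically in the lengths `q` and `r`. -/
def TopSubmod (s : ℕ) (f : ℕ → ℤ) : Prop :=
  ∀ a, s ≤ a → ∀ d q r, d + q + r = a.choose s → f d + f (a.choose s) ≤ f (d + q) + f (d + r)

lemma le_choose_add (n a : ℕ) : a ≤ a.choose (n + 1) + n := by
  induction a with
  | zero => omega
  | succ a ih =>
    rcases Nat.lt_or_ge a n with h | h
    · omega
    · have := Nat.choose_pos h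
      rw [Nat.choose_succ_succ' a n]
      omega

/-- The leading index of the binomial representation of `m`. -/
lemma exists_choose_bracket (n m : ℕ) (hm : 1 ≤ m) :
    ∃ b, n + 1 ≤ b ∧ b.choose (n + 1) ≤ m ∧ m < (b + 1).choose (n + 1) := by
  have hex : ∃ b, m < (b + 1).choose (n + 1) :=
    ⟨m + n, by have := le_choose_add n (m + n + 1); omega⟩
  classical
  refine ⟨Nat.find hex, ?_, ?_, Nat.find_spec hex⟩
  · by_contra hlt
    have h1 := Nat.find_spec hex
    have h2 := Nat.choose_le_choose (n + 1) (show Nat.find hex + 1 ≤ n + 1 by omega)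
    rw [Nat.choose_self] at h2
    omega
  · rcases hb : Nat.find hex with _ | b
    · simp
    · have := Nat.find_min hex (show b < Nat.find hex by omega)
      omega

/-- Dominance of the sequence for `s + 1` over that for `s` on initial segments. -/
lemma LexSums.le_succ {S : ℕ} {F : ℕ → ℕ → ℤ} {s : ℕ}
    (hF : LexSums S F) (hs : s < S) (hB : Subadd (F s)) :
    ∀ q, F s q ≤ F (s + 1) q := by
  intro q
  induction q using Nat.strong_induction_on with
  | _ q ih =>
    rcases Nat.lt_or_ge q 2 with hq | hq
    · interval_cases q
      · rw [hF.zero, hF.zero]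
      · exact hF.first s hs
    · obtain ⟨b, hb, hb1, hb2⟩ := exists_choose_bracket s (q - 1) (by omega)
      rw [Nat.choose_succ_succ' b s] at hb2
      obtain ⟨e, rfl⟩ : ∃ e, q = b.choose (s + 1) + e := ⟨q - b.choose (s + 1), by omega⟩
      have h1 := hF.block s b e hb (by omega)
      have h2 := hB (b.choose (s + 1)) e
      have h3 := ih (b.choose (s + 1)) (by omega)
      linarith

/-- Final windows contained in the last block are minimal. A window crossing the start of a block is
cut there: its right part is an initial segment of a block, hence at least as heavy as any window
of the last block, and the left part is shorter. -/
lemma LexSums.last_block {S : ℕ} {F : ℕ → ℕ → ℤ} {s : ℕ}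
    (hF : LexSums S F) (hs : s < S) (hB : Subadd (F s))
    (hA : TopSubmod s (F s)) (a : ℕ) (ha : s + 1 ≤ a) :
    ∀ q d, q ≤ a.choose s → d + q ≤ (a + 1).choose (s + 1) →
      F (s + 1) ((a + 1).choose (s + 1)) - F (s + 1) ((a + 1).choose (s + 1) - q)
        ≤ F (s + 1) (d + q) - F (s + 1) d := by
  have hN := Nat.choose_succ_succ' a s
  have hlast : ∀ q, q ≤ a.choose s → F (s + 1) ((a + 1).choose (s + 1) - q)
      = F (s + 1) (a.choose (s + 1)) + F s (a.choose s - q) := by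
    intro q hq
    rw [← hF.block s a _ ha (Nat.sub_le _ _)]
    congr 1
    omega
  have hlast0 := hlast 0 (Nat.zero_le _)
  simp only [Nat.sub_zero] at hlast0
  intro q
  induction q using Nat.strong_induction_on with
  | _ q ih =>
    intro d hq hd
    rcases Nat.eq_zero_or_pos q with rfl | hq0
    · simp
    have hlastq := hlast q hq
    rcases Nat.lt_or_ge (d + q) 2 with h2 | h2
    · obtain rfl : d = 0 := by omega
      obtain rfl : q = 1 := by omega
      have h1 := hB (a.choose s - 1) 1
      rw [Nat.sub_add_cancel hq] at h1
      have h3 := hF.first s hs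
      have h4 := hF.zero (s + 1)
      simp only [Nat.zero_add]
      linarith
    · obtain ⟨b, hb, hb1, hb2⟩ := exists_choose_bracket s (d + q - 1) (by omega)
      have hba : b ≤ a := by
        by_contra hlt
        have := Nat.choose_le_choose (s + 1) (show a + 1 ≤ b by omega)
        omega
      have hL := Nat.choose_le_choose s hba
      rw [Nat.choose_succ_succ' b s] at hb2
      obtain ⟨e, he⟩ : ∃ e, d + q = b.choose (s + 1) + e :=
        ⟨d + q - b.choose (s + 1), by omega⟩
      have h1 := hF.block s b e hb (by omega)
      rcases Nat.lt_or_ge d (b.choose (s + 1)) with hdb | hdb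
      · obtain ⟨z, hz⟩ : ∃ z, d + z = b.choose (s + 1) := ⟨b.choose (s + 1) - d, by omega⟩
        have h3 := ih z (by omega) d (by omega) (by omega)
        have h4 := hlast z (by omega)
        have h5 := hB (a.choose s - q) e
        rw [show a.choose s - q + e = a.choose s - z by omega] at h5
        rw [hz] at h3
        rw [he]
        linarith
      · have h3 := hA a (by omega) (e - q) q (a.choose s - e) (by omega)
        rw [show e - q + q = e by omega,
          show e - q + (a.choose s - e) = a.choose s - q by omega] at h3
        have h4 := hF.block s b (e - q) hb (by omega)
        rw [show b.choose (s + 1) + (e - q) = d by omega] at h4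
        rw [he]
        linarith

/-- Windows of length larger than the last block are handled by removing that block, which is
itself the lightest window of its length. -/
lemma LexSums.topSubmod_succ {S : ℕ} {F : ℕ → ℕ → ℤ} {s : ℕ}
    (hF : LexSums S F) (hs : s < S) (hB : Subadd (F s))
    (hA : TopSubmod s (F s)) : TopSubmod (s + 1) (F (s + 1)) := by
  intro a ha
  induction a, ha using Nat.le_induction with
  | base =>
    intro d q r h
    rw [Nat.choose_self] at h ⊢
    obtain ⟨rfl, rfl, rfl⟩ | ⟨rfl, rfl, rfl⟩ | ⟨rfl, rfl, rfl⟩ :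
      (d = 1 ∧ q = 0 ∧ r = 0) ∨ (d = 0 ∧ q = 1 ∧ r = 0) ∨ (d = 0 ∧ q = 0 ∧ r = 1) := by omega
    all_goals simp [add_comm]
  | succ a ha ih =>
    intro d q r h
    have hN := Nat.choose_succ_succ' a s
    have key := hF.last_block hs hB hA a ha
    rcases Nat.lt_or_ge (a.choose s) q with hq | hq
    · rcases Nat.lt_or_ge (a.choose s) r with hr | hr
      · have h1 := ih d q (r - a.choose s) (by omega)
        have h2 := key (a.choose s) (d + (r - a.choose s)) le_rfl (by omega)
        rw [show d + (r - a.choose s) + a.choose s = d + r by omega,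
          show (a + 1).choose (s + 1) - a.choose s = a.choose (s + 1) by omega] at h2
        linarith
      · have h2 := key r d hr (by omega)
        rw [show (a + 1).choose (s + 1) - r = d + q by omega] at h2
        linarith
    · have h2 := key q d hq (by omega)
      rw [show (a + 1).choose (s + 1) - q = d + r by omega] at h2
      linarith

lemma LexSums.subadd_succ {S : ℕ} {F : ℕ → ℕ → ℤ} {s : ℕ}
    (hF : LexSums S F) (hs : s < S) (hB : Subadd (F s))
    (hA : TopSubmod (s + 1) (F (s + 1))) : Subadd (F (s + 1)) := by
  have main : ∀ q r, q ≤ r → F (s + 1) (q + r) ≤ F (s + 1) q + F (s + 1) r := by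
    intro q
    induction q using Nat.strong_induction_on with
    | _ q ih =>
      intro r hqr
      rcases Nat.eq_zero_or_pos q with rfl | hq0
      · simp [hF.zero]
      obtain ⟨b, hb, hb1, hb2⟩ := exists_choose_bracket s r (by omega)
      have hN := Nat.choose_succ_succ' b s
      rcases Nat.lt_or_ge ((b + 1).choose (s + 1)) (q + r) with hx | hx
      · -- The window `[r, q + r)` is cut at `C(b + 1, s + 1)`: its left part is a final window of
        -- the first `C(b + 1, s + 1)` entries, its right part is shorter than `q`.
        obtain ⟨x, hxe⟩ : ∃ x, q + r = x + (b + 1).choose (s + 1) :=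
          ⟨q + r - (b + 1).choose (s + 1), by omega⟩
        have h1 := ih x (by omega) ((b + 1).choose (s + 1)) (by omega)
        have h2 := hA (b + 1) (by omega) x (q - x) ((b + 1).choose (s + 1) - q) (by omega)
        rw [show x + (q - x) = q by omega,
          show x + ((b + 1).choose (s + 1) - q) = r by omega] at h2
        rw [hxe]
        linarith
      · obtain ⟨e, rfl⟩ : ∃ e, r = b.choose (s + 1) + e := ⟨r - b.choose (s + 1), by omega⟩
        have h1 := hF.block s b e hb (by omega)
        have h2 := hF.block s b (q + e) hb (by omega)
        have h3 := hB q e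
        have h4 := hF.le_succ hs hB q
        rw [show q + (b.choose (s + 1) + e) = b.choose (s + 1) + (q + e) by omega]
        linarith
  intro q r
  rcases le_total q r with h | h
  · exact main q r h
  · have := main r q h
    rw [add_comm q r]
    linarith

lemma LexSums.subadd_topSubmod {S : ℕ} {F : ℕ → ℕ → ℤ} (hF : LexSums S F) :
    ∀ s, s ≤ S → Subadd (F s) ∧ TopSubmod s (F s) := by
  intro s
  induction s with
  | zero =>
    intro _
    refine ⟨fun q r => (hF.base q r).le, fun a _ d q r h => ?_⟩
    rw [← h, hF.base, hF.base d q, hF.base d r]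
    linarith
  | succ s ih =>
    intro hs
    obtain ⟨hB, hA⟩ := ih (by omega)
    have hA' := hF.topSubmod_succ hs hB hA
    exact ⟨hF.subadd_succ hs hB hA', hA'⟩

/-- `[d, c)` is a window of length `N - ∑ h_j` inside the first `N` entries, hence at least as heavy
as the window `[∑ h_j, N)`. -/
lemma LexSums.choose_le {S : ℕ} {F : ℕ → ℕ → ℤ} (hF : LexSums S F) (h k : ℕ)
    (hseq : Fin k → ℕ) (c d : ℕ) (hdc : d < c) (hc : c < (h + S).choose S)
    (heq : (h + S).choose S + d = (∑ j, hseq j) + c) :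
    F S ((h + S).choose S) ≤ (∑ j, F S (hseq j)) + F S c - F S d := by
  obtain ⟨hB, hA⟩ := hF.subadd_topSubmod S le_rfl
  have h1 := hA (h + S) (by omega) d (c - d) ((h + S).choose S - c) (by omega)
  rw [show d + (c - d) = c by omega,
    show d + ((h + S).choose S - c) = ∑ j, hseq j by omega] at h1
  have h2 := Finset.le_sum_of_subadditive (F S) (hF.zero S).le hB Finset.univ hseq
  linarith

/-! ### The Macaulay function -/

lemma macUp_zero_right (n : ℕ) : macUp n 0 = 0 := by
  cases n <;> simp [macUp]

lemma macUp_add_of_lt (n a r : ℕ) (ha : n + 1 ≤ a) (hr : r < a.choose n) :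
    macUp (n + 1) (a.choose (n + 1) + r) = (a + 1).choose (n + 1) + macUp n r := by
  have hpos := Nat.choose_pos ha
  have hfind : Nat.findGreatest (fun b => Nat.choose b (n + 1) ≤ a.choose (n + 1) + r)
      (a.choose (n + 1) + r + n + 1) = a := by
    rw [Nat.findGreatest_eq_iff]
    refine ⟨by have := le_choose_add n a; omega, fun _ => by omega, fun b hb _ => ?_⟩
    have h1 := Nat.choose_le_choose (n + 1) (show a + 1 ≤ b by omega)
    rw [Nat.choose_succ_succ'] at h1
    omega
  rw [macUp, if_neg (by omega)]
  simp only [hfind, Nat.add_sub_cancel_left]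

lemma macUp_choose (n a : ℕ) (ha : n ≤ a) : macUp n (a.choose n) = (a + 1).choose n := by
  cases n with
  | zero => simp [macUp]
  | succ n =>
    have := macUp_add_of_lt n a 0 ha (Nat.choose_pos (by omega))
    simpa [macUp_zero_right] using this

lemma macUp_one (n : ℕ) : macUp n 1 = n + 1 := by
  have := macUp_choose n n le_rfl
  rwa [Nat.choose_self, Nat.choose_succ_self_right] at this

/-- The recursion extends to `r = C(a, n)`, where the leading index of the argument is `a + 1`. -/
lemma macUp_add (n a r : ℕ) (ha : n + 1 ≤ a) (hr : r ≤ a.choose n) :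
    macUp (n + 1) (a.choose (n + 1) + r) = (a + 1).choose (n + 1) + macUp n r := by
  rcases hr.lt_or_eq with h | rfl
  · exact macUp_add_of_lt n a r ha h
  · rw [macUp_choose n a (by omega), add_comm (a.choose (n + 1)), ← Nat.choose_succ_succ',
      macUp_choose _ _ (by omega), Nat.choose_succ_succ', add_comm]

lemma macUp_le (n : ℕ) : ∀ a r, n ≤ a → r ≤ a.choose n → macUp n r ≤ (a + 1).choose n := by
  induction n with
  | zero =>
    intro a r _ h
    simpa [macUp] using h
  | succ n ih =>
    intro a r ha hr
    rcases Nat.eq_zero_or_pos r with rfl | hr0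
    · simp [macUp_zero_right]
    obtain ⟨b, hb, hb1, hb2⟩ := exists_choose_bracket n r hr0
    rcases Nat.lt_or_ge b a with hba | hba
    · rw [Nat.choose_succ_succ'] at hb2
      obtain ⟨e, rfl⟩ : ∃ e, r = b.choose (n + 1) + e := ⟨r - b.choose (n + 1), by omega⟩
      rw [macUp_add n b e hb (by omega)]
      have h1 := ih b e (by omega) (by omega)
      have h2 := Nat.choose_le_choose (n + 1) (show b + 1 + 1 ≤ a + 1 by omega)
      rw [Nat.choose_succ_succ'] at h2
      omega
    · have h1 := Nat.choose_le_choose (n + 1) hba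
      obtain rfl : r = a.choose (n + 1) := by omega
      exact (macUp_choose _ _ ha).le

lemma macUp_macUp_add (n a r : ℕ) (ha : n + 1 ≤ a) (hr : r ≤ a.choose n) :
    macUp (n + 1) (macUp (n + 1) (a.choose (n + 1) + r))
      = (a + 2).choose (n + 1) + macUp n (macUp n r) := by
  rw [macUp_add n a r ha hr, macUp_add n (a + 1) _ (by omega) (macUp_le n a r (by omega) hr)]

lemma macUp_macUp_one (n : ℕ) : macUp n (macUp n 1) = (n + 2).choose 2 := by
  have h := macUp_choose n n le_rfl
  rw [Nat.choose_self] at h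
  rw [h, macUp_choose n (n + 1) (by omega), show n + 1 + 1 = n + 2 from rfl,
    ← Nat.choose_symm_add]

/-- Since `macUp s 1 = s + 1` and `macUp s (macUp s 1) = C(s + 2, 2)`, the first entries
`x * (s + 1) + y * C(s + 2, 2)` of the combination have increments `x + y * (s + 2)`. -/
lemma lexSums_comb (S : ℕ) (x y : ℤ) (hxy : ∀ s : ℕ, s < S → 0 ≤ x + y * (s + 2)) :
    LexSums S (fun s m => x * (macUp s m : ℤ) + y * (macUp s (macUp s m) : ℤ)) where
  zero s := by simp [macUp_zero_right]
  base q r := by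
    simp only [macUp]
    push_cast
    ring
  block s a r ha hr := by
    have h1 : macUp (s + 1) (macUp (s + 1) (a.choose (s + 1))) = (a + 2).choose (s + 1) := by
      rw [macUp_choose _ a ha, macUp_choose _ (a + 1) (by omega)]
    rw [h1, macUp_macUp_add s a r ha hr, macUp_add s a r ha hr, macUp_choose _ a ha]
    push_cast
    ring
  first s hs := by
    have h1 := hxy s hs
    rw [macUp_macUp_one, macUp_macUp_one, macUp_one, macUp_one]
    rw [show s + 1 + 2 = (s + 2) + 1 from rfl, Nat.choose_succ_succ' (s + 2) 1, Nat.choose_one_right]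
    push_cast
    linarith

/-- If `C(h+s, s) = ∑_{j=1}^k h_j + c - d` with `0 < h_j < C(h+s, s)`,
`C(h+s, s) > c > d ≥ 0` and `k ≥ 1`, then
`C(h+s, s)^{<s>} ≤ ∑_j h_j^{<s>} + c^{<s>} - d^{<s>}`; moreover, if equality
holds, then
`(C(h+s, s)^{<s>})^{<s>} = ∑_j (h_j^{<s>})^{<s>} + (c^{<s>})^{<s>} - (d^{<s>})^{<s>}`. -/
theorem macUp_choose_sum (h s k : ℕ) (hh : 0 < h) (hs : 0 < s) (hk : 1 ≤ k)
    (hseq : Fin k → ℕ) (c d : ℕ)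
    (hpos : ∀ j, 0 < hseq j) (hlt : ∀ j, hseq j < (h + s).choose s)
    (hdc : d < c) (hc : c < (h + s).choose s)
    (heq : ((h + s).choose s : ℤ) = (∑ j, (hseq j : ℤ)) + (c : ℤ) - (d : ℤ)) :
    ((macUp s ((h + s).choose s) : ℤ) ≤
        (∑ j, (macUp s (hseq j) : ℤ)) + (macUp s c : ℤ) - (macUp s d : ℤ)) ∧
      ((macUp s ((h + s).choose s) : ℤ) =
          (∑ j, (macUp s (hseq j) : ℤ)) + (macUp s c : ℤ) - (macUp s d : ℤ) →
        (macUp s (macUp s ((h + s).choose s)) : ℤ) =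
          (∑ j, (macUp s (macUp s (hseq j)) : ℤ)) +
            (macUp s (macUp s c) : ℤ) - (macUp s (macUp s d) : ℤ)) := by
  have heq' : (h + s).choose s + d = (∑ j, hseq j) + c := by
    zify
    linarith
  have h1 := (lexSums_comb s 1 0 (by simp)).choose_le h k hseq c d hdc hc heq'
  have h2 := (lexSums_comb s 0 1 (fun i _ => by positivity)).choose_le h k hseq c d hdc hc heq'
  -- `s + 1` is the least coefficient for which the first entries increase up to `s`.
  have h3 := (lexSums_comb s (s + 1) (-1) (fun i hi => by
    have : (i : ℤ) + 1 ≤ s := by exact_mod_cast hi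
    linarith)).choose_le h k hseq c d hdc hc heq'
  simp only [one_mul, zero_mul, add_zero, zero_add] at h1 h2
  simp only [Finset.sum_add_distrib, ← Finset.mul_sum] at h3
  refine ⟨h1, fun he => le_antisymm h2 ?_⟩
  rw [he] at h3
  linarith
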